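/- arXiv:1406.6210 — 5 statements merged into one kernel-verified Lean document; each statement's English description precedes it below -/
import Mathlib

section
/- Let L be an even integer and let q1, q2 ≥ 2 be integers with q1 + q2 ≤ L − 2; set q3 = L − q1 − q2, suppose q1, q2, q3 are pairwise distinct, and let q_l < q_m < q_u be the increasing rearrangement of q1, q2, q3. Let I = {0, q1, q1 + q2} ⊆ Z_L, so that d*(I) = {q_l, q_m, q_u, L − q_u, L − q_m, L − q_l}. If q_u < L/2, then: (i) if q_l + 1 = q_m = q_u − 1 = L/3, then |d⁺(I)| = 8; (ii) otherwise, |d⁺(I)| ≥ 10. -/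
open Finset

/-- The set of differences of a codeword `I ⊆ ℤ_L`. -/
def dset {L : ℕ} (I : Finset (ZMod L)) : Finset (ZMod L) :=
  (I ×ˢ I).image fun p => p.1 - p.2

/-- The set of nonzero differences. -/
def dstar {L : ℕ} (I : Finset (ZMod L)) : Finset (ZMod L) := dset I \ {0}

/-- The set of shifted nonzero differences `d⁺(I) = d*(I) ∪ (d*(I)+1)`. -/
def dplus {L : ℕ} (I : Finset (ZMod L)) : Finset (ZMod L) :=
  dstar I ∪ (dstar I).image (· + 1)

/-!
For `I = {0, q₁, q₁ + q₂}` one has `d*(I) = T ∪ -T` with `T = {q₁, q₂, q₃}`. The reflection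
`x ↦ 1 - x` exchanges `T ∪ (T + 1)` and `-T ∪ (-T + 1)`, and for `q_u < L / 2` these two sets
lie in different halves `[1, L/2]` and `[L/2 + 1, L]` of a period. Hence
`|d⁺(I)| = 2 |T ∪ (T + 1)|`, now counted among the natural numbers, where `|T ∪ (T + 1)|` is `6`
minus the number of pairs of consecutive elements of `T`.
-/

open scoped Pointwise

/-- The union `S ∪ (S + 1)`, defined over any type with `+` and `1` so that it can be formed both
in `ℤ_L`, where it turns `d*(I)` into `d⁺(I)`, and in `ℕ`, where it is easy to count. -/
def shiftUnion {R : Type*} [Add R] [One R] [DecidableEq R] (S : Finset R) : Finset R :=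
  S ∪ S.image (· + 1)

section ShiftUnion

variable {R : Type*} [DecidableEq R]

lemma shiftUnion_image_natCast [AddMonoidWithOne R] (S : Finset ℕ) :
    shiftUnion (S.image (Nat.cast : ℕ → R)) = (shiftUnion S).image Nat.cast := by
  simp only [shiftUnion, image_union, image_image, Function.comp_def, Nat.cast_add, Nat.cast_one]

lemma shiftUnion_union_neg [AddCommGroupWithOne R] (S : Finset R) :
    shiftUnion (S ∪ -S) = shiftUnion S ∪ (shiftUnion S).image (1 - ·) := by
  have image_one_sub : S.image (1 - ·) = (-S).image (· + 1) := by
    simp only [neg_def, image_image, Function.comp_def, neg_add_eq_sub]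
  have image_one_sub_add_one : (S.image (· + 1)).image (1 - ·) = -S := by
    simp only [neg_def, image_image, Function.comp_def, sub_add_cancel_right]
  simp only [shiftUnion, image_union, image_one_sub, image_one_sub_add_one]
  ac_rfl

lemma card_shiftUnion_of_lt_of_lt {a b c : ℕ} (hab : a < b) (hbc : b < c) :
    (shiftUnion {a, b, c}).card + ((if a + 1 = b then 1 else 0) + if b + 1 = c then 1 else 0)
      = 6 := by
  have card_triple {x y z : ℕ} (hxy : x < y) (hyz : y < z) : ({x, y, z} : Finset ℕ).card = 3 :=
    card_eq_three.2 ⟨x, y, z, hxy.ne, (hxy.trans hyz).ne, hyz.ne, rfl⟩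
  have inter_eq : ({a, b, c} ∩ {a + 1, b + 1, c + 1} : Finset ℕ)
      = (if a + 1 = b then {b} else ∅) ∪ if b + 1 = c then {c} else ∅ := by
    grind
  have card_inter : ({a, b, c} ∩ {a + 1, b + 1, c + 1} : Finset ℕ).card
      = (if a + 1 = b then 1 else 0) + if b + 1 = c then 1 else 0 := by
    rw [inter_eq]
    split_ifs <;> simp [hbc.ne]
  simp only [shiftUnion, image_insert, image_singleton]
  rw [← card_inter, card_union_add_card_inter, card_triple hab hbc,
    card_triple (add_lt_add_left hab 1) (add_lt_add_left hbc 1)]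

end ShiftUnion

section LowerHalf

variable {L : ℕ} {S : Finset ℕ}

lemma card_image_natCast_zmod (hS : ∀ s ∈ S, s < L) :
    (S.image (Nat.cast : ℕ → ZMod L)).card = S.card := by
  refine card_image_of_injOn fun a ha b hb hab => ?_
  exact ((ZMod.natCast_eq_natCast_iff a b L).1 hab).eq_of_lt_of_lt (hS a ha) (hS b hb)

lemma disjoint_image_one_sub_zmod (hS : ∀ s ∈ S, 0 < s ∧ 2 * s ≤ L) :
    Disjoint (S.image (Nat.cast : ℕ → ZMod L)) ((S.image Nat.cast).image (1 - ·)) := by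
  simp only [disjoint_left, mem_image, not_exists, not_and, forall_exists_index, and_imp,
    forall_apply_eq_imp_iff₂]
  intro a ha b hb hab
  obtain ⟨ha_pos, ha_le⟩ := hS a ha
  obtain ⟨hb_pos, hb_le⟩ := hS b hb
  have cast_eq_zero : ((a + b - 1 : ℕ) : ZMod L) = 0 := by
    rw [Nat.cast_sub (by lia), Nat.cast_add, Nat.cast_one, ← hab]
    abel
  have L_le : L ≤ a + b - 1 :=
    Nat.le_of_dvd (by lia) ((ZMod.natCast_eq_zero_iff _ _).1 cast_eq_zero)
  lia

lemma card_union_image_one_sub_zmod (hS : ∀ s ∈ S, 0 < s ∧ 2 * s ≤ L) :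
    (S.image (Nat.cast : ℕ → ZMod L) ∪ (S.image Nat.cast).image (1 - ·)).card = 2 * S.card := by
  rw [card_union_of_disjoint (disjoint_image_one_sub_zmod hS),
    card_image_of_injective _ sub_right_injective,
    card_image_natCast_zmod fun s hs => by have := hS s hs; lia, two_mul]

end LowerHalf

section Codeword

variable {L : ℕ}

lemma dplus_eq_shiftUnion_dstar (I : Finset (ZMod L)) : dplus I = shiftUnion (dstar I) := rfl

lemma dset_eq_sub (I : Finset (ZMod L)) : dset I = I - I := rfl

lemma dset_triple {x y z : ZMod L} (hxyz : x + y + z = 0) :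
    dset {0, x, x + y} = {0} ∪ ({x, y, z} ∪ -{x, y, z}) := by
  obtain rfl : z = -(x + y) := (neg_eq_of_add_eq_zero_right hxyz).symm
  ext w
  simp only [dset_eq_sub, mem_sub, mem_union, mem_neg', mem_insert, mem_singleton,
    exists_eq_or_imp, exists_eq_left]
  grind

lemma dstar_triple {x y z : ZMod L} (hxyz : x + y + z = 0)
    (hx : x ≠ 0) (hy : y ≠ 0) (hz : z ≠ 0) :
    dstar {0, x, x + y} = {x, y, z} ∪ -{x, y, z} := by
  have zero_notMem : (0 : ZMod L) ∉ ({x, y, z} ∪ -{x, y, z} : Finset (ZMod L)) := by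
    simp [hx, hy, hz, hx.symm, hy.symm, hz.symm]
  rw [dstar, dset_triple hxyz,
    union_sdiff_cancel_left (disjoint_singleton_left.2 zero_notMem)]

lemma card_dplus_eq_two_mul_card_shiftUnion {q₁ q₂ q₃ : ℕ} (hsum : q₁ + q₂ + q₃ = L)
    (hle : ∀ q ∈ ({q₁, q₂, q₃} : Finset ℕ), 2 * (q + 1) ≤ L) :
    (dplus {0, (q₁ : ZMod L), ((q₁ + q₂ : ℕ) : ZMod L)}).card
      = 2 * (shiftUnion {q₁, q₂, q₃}).card := by
  have hpos : ∀ q ∈ ({q₁, q₂, q₃} : Finset ℕ), 0 < q := by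
    simp only [forall_mem_insert, mem_singleton, forall_eq] at hle ⊢
    lia
  have cast_ne_zero : ∀ q ∈ ({q₁, q₂, q₃} : Finset ℕ), (q : ZMod L) ≠ 0 := fun q hq hq0 => by
    have := Nat.le_of_dvd (hpos q hq) ((ZMod.natCast_eq_zero_iff q L).1 hq0)
    have := hle q hq
    lia
  have cast_sum : (q₁ + q₂ + q₃ : ZMod L) = 0 := by
    rw [← ZMod.natCast_self L]
    exact_mod_cast congrArg Nat.cast hsum
  have dstar_eq : dstar {0, (q₁ : ZMod L), ((q₁ + q₂ : ℕ) : ZMod L)}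
      = ({q₁, q₂, q₃} : Finset ℕ).image Nat.cast ∪ -({q₁, q₂, q₃} : Finset ℕ).image Nat.cast := by
    simp only [image_insert, image_singleton, Nat.cast_add]
    exact dstar_triple cast_sum (cast_ne_zero _ (by simp)) (cast_ne_zero _ (by simp))
      (cast_ne_zero _ (by simp))
  have lower_half : ∀ s ∈ shiftUnion {q₁, q₂, q₃}, 0 < s ∧ 2 * s ≤ L := by
    intro s hs
    obtain hs | ⟨q, hq, rfl⟩ := (mem_union.1 hs).imp_right mem_image.1
    · exact ⟨hpos s hs, by have := hle s hs; lia⟩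
    · exact ⟨q.succ_pos, hle q hq⟩
  rw [dplus_eq_shiftUnion_dstar, dstar_eq, shiftUnion_union_neg, shiftUnion_image_natCast,
    card_union_image_one_sub_zmod lower_half]

end Codeword

theorem dplus_card_nonequidiff_qu_small_general {L q₁ q₂ q₃ ql qm qu : ℕ}
    (hsum : q₁ + q₂ + q₃ = L) (hperm : ({q₁, q₂, q₃} : Multiset ℕ) = {ql, qm, qu})
    (hlm : ql < qm) (hmu : qm < qu) (hqu : 2 * (qu + 1) ≤ L) :
    (dplus {0, (q₁ : ZMod L), ((q₁ + q₂ : ℕ) : ZMod L)}).card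
      + 2 * ((if ql + 1 = qm then 1 else 0) + if qm + 1 = qu then 1 else 0) = 12 := by
  have hset : ({q₁, q₂, q₃} : Finset ℕ) = {ql, qm, qu} := by
    simpa using congrArg Multiset.toFinset hperm
  have hle : ∀ q ∈ ({q₁, q₂, q₃} : Finset ℕ), 2 * (q + 1) ≤ L := by
    simp only [hset, forall_mem_insert, mem_singleton, forall_eq]
    lia
  rw [card_dplus_eq_two_mul_card_shiftUnion hsum hle, hset, ← mul_add,
    card_shiftUnion_of_lt_of_lt hlm hmu]

theorem dplus_card_nonequidiff_qu_small (L q1 q2 q3 ql qm qu : ℕ) (hL : Even L)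
    (hq1 : 2 ≤ q1) (hq2 : 2 ≤ q2) (hsum : q1 + q2 ≤ L - 2)
    (hq3 : q3 = L - q1 - q2)
    (hperm : ({q1, q2, q3} : Multiset ℕ) = {ql, qm, qu})
    (hlm : ql < qm) (hmu : qm < qu)
    (I : Finset (ZMod L)) (hI : I = {0, (q1 : ZMod L), ((q1 + q2 : ℕ) : ZMod L)})
    (hqu : qu < L / 2) :
    (ql + 1 = qm ∧ qm + 1 = qu ∧ 3 * qm = L → (dplus I).card = 8) ∧
    (¬ (ql + 1 = qm ∧ qm + 1 = qu ∧ 3 * qm = L) → 10 ≤ (dplus I).card) := by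
  have hsum' : ql + qm + qu = q1 + q2 + q3 := by
    simpa [add_assoc] using congrArg Multiset.sum hperm.symm
  have hcard := dplus_card_nonequidiff_qu_small_general (L := L) (by lia) hperm hlm hmu (by lia)
  grind
end

section
/- Let L be an even integer and let I = {0, g, 2g mod L} ⊆ Z_L be an equi-difference codeword of weight 3 (that is, |I| = 3) with generator g, 2 ≤ g ≤ L/2, such that {1, L−1} ∩ d*(I) = ∅. Call I non-dispersive if there exist distinct elements a, b ∈ d(I) with b ≡ a + 1 (mod L). If I is non-dispersive, then there are exactly two elements x ∈ d*(I) with x + 1 ∈ d*(I) (i.e., exactly two pairs of consecutive elements in d*(I)), and g = (L+1)/3 or g = (L−1)/3. -/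
open Finset

/-!
The differences of `{0, x, 2x}` are the multiples `k x` with `|k| ≤ 2`. A consecutive pair
`j x = k x + 1` therefore gives `m x = 1` for `m = j - k`, `|m| ≤ 4`. Here `|m| ≤ 2` would make `1`
a difference, and `|m| = 4` is impossible because `1` is not even modulo the even number `L`; hence
`3 x = ±1`. Replacing `x` by `-x`, which does not change the differences, let `3 x = 1`. Then
`m = 3` for every consecutive pair, so the pairs of nonzero differences are exactly `(-2x, x)` and
`(-x, 2x)`.
-/

section Differences

variable {L : ℕ} {I : Finset (ZMod L)} {y : ZMod L}

theorem mem_dset : y ∈ dset I ↔ ∃ a ∈ I, ∃ b ∈ I, a - b = y := by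
  simp only [dset, mem_image, mem_product, Prod.exists]
  grind

theorem mem_dstar : y ∈ dstar I ↔ y ∈ dset I ∧ y ≠ 0 := by
  rw [dstar, mem_sdiff, mem_singleton]

end Differences

theorem not_even_one_of_even_modulus {L : ℕ} (hL : Even L) : ¬ Even (1 : ZMod L) := by
  intro h_one
  have h_image : Even (1 : ZMod 2) := by
    simpa only [map_one] using h_one.map (ZMod.castHom hL.two_dvd (ZMod 2))
  exact absurd h_image (by rw [even_iff_exists_two_nsmul]; decide)

/-- The equi-difference codeword `{0, x, 2x}` of weight at most 3, with an arbitrary residue `x` as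
generator, so that `x` and `-x` can be interchanged. -/
def equidiffCodeword {L : ℕ} (x : ZMod L) : Finset (ZMod L) := {0, x, 2 * x}

section EquidiffCodeword

variable {L : ℕ} {x y : ZMod L}

theorem mem_equidiffCodeword :
    y ∈ equidiffCodeword x ↔ ∃ i : ℤ, 0 ≤ i ∧ i ≤ 2 ∧ i * x = y := by
  simp only [equidiffCodeword, mem_insert, mem_singleton]
  constructor
  · rintro (rfl | rfl | rfl)
    · exact ⟨0, by simp⟩
    · exact ⟨1, by simp⟩
    · exact ⟨2, by simp⟩
  · rintro ⟨i, hi_nonneg, hi_le, rfl⟩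
    interval_cases i <;> simp

theorem mem_dset_equidiffCodeword :
    y ∈ dset (equidiffCodeword x) ↔ ∃ k : ℤ, |k| ≤ 2 ∧ k * x = y := by
  simp only [mem_dset, mem_equidiffCodeword]
  constructor
  · rintro ⟨_, ⟨i, hi_nonneg, hi_le, rfl⟩, _, ⟨j, hj_nonneg, hj_le, rfl⟩, rfl⟩
    exact ⟨i - j, abs_le.2 ⟨by lia, by lia⟩, by push_cast; ring⟩
  · rintro ⟨k, hk, rfl⟩
    obtain ⟨hk_ge, hk_le⟩ := abs_le.1 hk
    rcases le_total 0 k with hk_nonneg | hk_nonpos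
    · exact ⟨k * x, ⟨k, hk_nonneg, hk_le, rfl⟩, 0, ⟨0, by simp⟩, sub_zero _⟩
    · exact ⟨0, ⟨0, by simp⟩, (-k : ℤ) * x, ⟨-k, by lia, by lia, rfl⟩, by push_cast; ring⟩

theorem dset_equidiffCodeword_neg (x : ZMod L) :
    dset (equidiffCodeword (-x)) = dset (equidiffCodeword x) := by
  ext y
  simp only [mem_dset_equidiffCodeword]
  refine (Equiv.neg ℤ).exists_congr fun k => ?_
  simp

theorem dstar_equidiffCodeword_neg (x : ZMod L) :
    dstar (equidiffCodeword (-x)) = dstar (equidiffCodeword x) := by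
  rw [dstar, dstar, dset_equidiffCodeword_neg]

theorem two_mul_ne_zero_of_card_equidiffCodeword (hcard : (equidiffCodeword x).card = 3) :
    2 * x ≠ 0 := by
  intro h_two_mul
  have h_pair : equidiffCodeword x = {0, x} := by
    rw [equidiffCodeword, h_two_mul, pair_comm x 0, insert_idem]
  have h_card_le : (equidiffCodeword x).card ≤ 2 := h_pair ▸ card_le_two
  lia

theorem abs_eq_three_of_intCast_mul_eq_one (hL : Even L) (h1 : 1 ∉ dstar (equidiffCodeword x))
    {m : ℤ} (hm : |m| ≤ 4) (hmx : m * x = 1) : |m| = 3 := by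
  have h_one_ne_zero : (1 : ZMod L) ≠ 0 := fun h =>
    not_even_one_of_even_modulus hL (h ▸ Even.zero)
  have h_two_lt : 2 < |m| := by
    by_contra! hm_le
    exact h1 (mem_dstar.2 ⟨mem_dset_equidiffCodeword.2 ⟨m, hm_le, hmx⟩, h_one_ne_zero⟩)
  have h_ne_four : |m| ≠ 4 := by
    intro hm_four
    have hm_even : Even m := even_abs.1 (hm_four ▸ by decide)
    have h_even_mul : Even ((m : ZMod L) * x) :=
      (hm_even.map (Int.castRingHom (ZMod L))).mul_right x
    exact not_even_one_of_even_modulus hL (hmx ▸ h_even_mul)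
  lia

theorem exists_abs_eq_three_of_consecutive (hL : Even L) (h1 : 1 ∉ dstar (equidiffCodeword x))
    (hy : y ∈ dset (equidiffCodeword x)) (hy' : y + 1 ∈ dset (equidiffCodeword x)) :
    ∃ k m : ℤ, |k| ≤ 2 ∧ |k + m| ≤ 2 ∧ |m| = 3 ∧ k * x = y ∧ m * x = 1 := by
  obtain ⟨k, hk, hkx⟩ := mem_dset_equidiffCodeword.1 hy
  obtain ⟨j, hj, hjx⟩ := mem_dset_equidiffCodeword.1 hy'
  have h_diff : ((j - k : ℤ) : ZMod L) * x = 1 := by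
    push_cast
    linear_combination hjx - hkx
  have h_abs_le : |j - k| ≤ 4 := by linarith [abs_sub j k]
  exact ⟨k, j - k, hk, by rwa [add_sub_cancel],
    abs_eq_three_of_intCast_mul_eq_one hL h1 h_abs_le h_diff, hkx, h_diff⟩

theorem three_mul_eq_one_or_neg_one_of_consecutive (hL : Even L)
    (h1 : 1 ∉ dstar (equidiffCodeword x))
    (hy : y ∈ dset (equidiffCodeword x)) (hy' : y + 1 ∈ dset (equidiffCodeword x)) :
    3 * x = 1 ∨ 3 * x = -1 := by
  obtain ⟨-, m, -, -, hm, -, hmx⟩ := exists_abs_eq_three_of_consecutive hL h1 hy hy'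
  rcases eq_or_eq_neg_of_abs_eq hm with rfl | rfl
  · exact Or.inl (by simpa using hmx)
  · exact Or.inr (by simpa [neg_eq_iff_eq_neg] using hmx)

theorem filter_consecutive_dstar_equidiffCodeword (hL : Even L) (hx : 2 * x ≠ 0)
    (h1 : 1 ∉ dstar (equidiffCodeword x)) (h3 : 3 * x = 1) :
    {y ∈ dstar (equidiffCodeword x) | y + 1 ∈ dstar (equidiffCodeword x)} = {-(2 * x), -x} := by
  have hx_ne : x ≠ 0 := right_ne_zero_of_mul hx
  have h_mem {k : ℤ} (hk : |k| ≤ 2) : (k : ZMod L) * x ∈ dset (equidiffCodeword x) :=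
    mem_dset_equidiffCodeword.2 ⟨k, hk, rfl⟩
  ext y
  simp only [mem_filter, mem_dstar, mem_insert, mem_singleton]
  constructor
  · rintro ⟨⟨hy, hy_ne⟩, hy', hy'_ne⟩
    obtain ⟨k, m, hk, hkm, hm, rfl, hmx⟩ := exists_abs_eq_three_of_consecutive hL h1 hy hy'
    have hm_eq : m = 3 := by
      refine (eq_or_eq_neg_of_abs_eq hm).resolve_right ?_
      rintro rfl
      push_cast at hmx
      -- `3 x = 1 = -3 x` would give `2 = 0`.
      exact hx (by linear_combination (-x) * (h3 + hmx))
    have hk_ne : k ≠ 0 := by rintro rfl; simp at hy_ne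
    have hkm_ne : k + m ≠ 0 := fun h => hy'_ne (by
      rw [← hmx, ← add_mul, ← Int.cast_add, h, Int.cast_zero, zero_mul])
    obtain rfl | rfl : k = -2 ∨ k = -1 := by grind
    all_goals simp
  · rintro (rfl | rfl)
    · have h_succ : -(2 * x) + 1 = x := by linear_combination -h3
      rw [h_succ]
      exact ⟨⟨by simpa using h_mem (k := -2) (by simp), neg_ne_zero.2 hx⟩,
        by simpa using h_mem (k := 1) (by simp), hx_ne⟩
    · have h_succ : -x + 1 = 2 * x := by linear_combination -h3
      rw [h_succ]
      exact ⟨⟨by simpa using h_mem (k := -1) (by simp), neg_ne_zero.2 hx_ne⟩,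
        by simpa using h_mem (k := 2) (by simp), hx⟩

theorem card_filter_consecutive_dstar_equidiffCodeword (hL : Even L) (hx : 2 * x ≠ 0)
    (h1 : 1 ∉ dstar (equidiffCodeword x)) (h3 : 3 * x = 1 ∨ 3 * x = -1) :
    #{y ∈ dstar (equidiffCodeword x) | y + 1 ∈ dstar (equidiffCodeword x)} = 2 := by
  wlog h3_one : 3 * x = 1 generalizing x
  · have h3_neg : 3 * -x = 1 := by rw [mul_neg, h3.resolve_left h3_one, neg_neg]
    simpa only [dstar_equidiffCodeword_neg] using
      this (x := -x) (by rwa [mul_neg, neg_ne_zero]) (by rwa [dstar_equidiffCodeword_neg])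
        (Or.inl h3_neg) h3_neg
  rw [filter_consecutive_dstar_equidiffCodeword hL hx h1 h3_one, card_pair]
  intro h_eq
  exact right_ne_zero_of_mul hx (by linear_combination -h_eq)

end EquidiffCodeword

section Generator

variable {L g : ℕ}

theorem three_mul_eq_modulus_add_one (hg : 0 < g) (hgL : 2 * g ≤ L)
    (h3 : 3 * (g : ZMod L) = 1) : 3 * g = L + 1 := by
  have h_dvd : L ∣ 3 * g - 1 := by
    rw [← ZMod.natCast_eq_zero_iff, Nat.cast_sub (by lia)]
    push_cast
    rw [h3, sub_self]
  have h_eq : 3 * g - 1 = L := Nat.eq_of_dvd_of_lt_two_mul (by lia) h_dvd (by lia)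
  lia

theorem three_mul_add_one_eq_modulus (hg : 2 ≤ g) (hgL : 2 * g ≤ L)
    (h3 : 3 * (g : ZMod L) = -1) : 3 * g + 1 = L := by
  have h_dvd : L ∣ 3 * g + 1 := by
    rw [← ZMod.natCast_eq_zero_iff]
    push_cast
    rw [h3, neg_add_cancel]
  exact Nat.eq_of_dvd_of_lt_two_mul (by lia) h_dvd (by lia)

end Generator

theorem equidiff_nondispersive (L g : ℕ) (hL : Even L) (hg : 2 ≤ g) (hgL : 2 * g ≤ L)
    (I : Finset (ZMod L)) (hI : I = {0, (g : ZMod L), ((2 * g : ℕ) : ZMod L)})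
    (hcard : I.card = 3)
    (h1 : (1 : ZMod L) ∉ dstar I) (h2 : (-1 : ZMod L) ∉ dstar I)
    (hnd : ∃ a ∈ dset I, ∃ b ∈ dset I, a ≠ b ∧ b = a + 1) :
    ((dstar I).filter fun x => x + 1 ∈ dstar I).card = 2 ∧
    (3 * g = L + 1 ∨ 3 * g = L - 1) := by
  obtain rfl : I = equidiffCodeword (g : ZMod L) := by
    rw [hI, equidiffCodeword, Nat.cast_mul, Nat.cast_two]
  obtain ⟨a, ha, _, hb, -, rfl⟩ := hnd
  have h3 : 3 * (g : ZMod L) = 1 ∨ 3 * (g : ZMod L) = -1 :=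
    three_mul_eq_one_or_neg_one_of_consecutive hL h1 ha hb
  have h2g : 2 * (g : ZMod L) ≠ 0 := two_mul_ne_zero_of_card_equidiffCodeword hcard
  refine ⟨card_filter_consecutive_dstar_equidiffCodeword hL h2g h1 h3, ?_⟩
  refine h3.imp (three_mul_eq_modulus_add_one (by lia) hgL) fun h3_neg => ?_
  exact Nat.eq_sub_of_add_eq (three_mul_add_one_eq_modulus hg hgL h3_neg)
end

section
/- Let L ≥ 6 be an even integer and let I = {0, g, 2g mod L} ⊆ Z_L be an equi-difference codeword of weight 3 (that is, |I| = 3) with generator g, 2 ≤ g ≤ L/2, such that {1, L−1} ∩ d*(I) = ∅. Then |d⁺(I)| = 4 if g = L/3; |d⁺(I)| = 6 if g = L/4, g = (L+1)/3, or g = (L−1)/3; and |d⁺(I)| = 8 otherwise. -/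
open Finset

/-!
`d⁺(I)` is the union of `d*(I)` and its translate by one, so `|d⁺(I)| = 2|d*(I)| - |O|` where `O` is
the overlap of `d*(I)` with its translate. For a generator `x` one has `d*(I) = {±x, ±2x}`, which
has two elements if `3x = 0`, three if `4x = 0`, and four otherwise. An element of `O` gives two
elements of `{±x, ±2x}` that are one apart, while any two of these differ by one of
`0, ±x, ±2x, ±3x, ±4x`. As `1` is not in `d*(I)` and, for `L` even, `4x` is not `±1`, the overlap
is empty unless `3x = ±1`, when it has two elements.
-/

/-- The overlap of `d*(I)` with its translate by one: the differences whose predecessor is also a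
nonzero difference. It measures how far `|d⁺(I)|` falls short of `2|d*(I)|`. -/
def shiftOverlap {L : ℕ} (I : Finset (ZMod L)) : Finset (ZMod L) :=
  dstar I ∩ (dstar I).image (· + 1)

/-- The equi-difference codeword of weight three generated by `x`. The generator is an arbitrary
residue, so the set has fewer than three elements when `2 * x = 0`. -/
def equiDiff {L : ℕ} (x : ZMod L) : Finset (ZMod L) := {0, x, 2 * x}

theorem card_dplus_add_card_shiftOverlap {L : ℕ} (I : Finset (ZMod L)) :
    #(dplus I) + #(shiftOverlap I) = 2 * #(dstar I) := by
  have card_translate : #((dstar I).image (· + 1)) = #(dstar I) :=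
    card_image_of_injective _ (add_left_injective 1)
  rw [dplus, shiftOverlap, card_union_add_card_inter, card_translate, two_mul]

namespace equiDiff

variable {L : ℕ} {x : ZMod L}

theorem two_mul_ne_zero_of_card_eq_three (hcard : #(equiDiff x) = 3) : 2 * x ≠ 0 := by
  intro h
  have le_two : #(equiDiff x) ≤ 2 := by
    rw [equiDiff, h, insert_comm, pair_eq_singleton]
    exact card_le_two
  omega

theorem dstar_eq (hx : 2 * x ≠ 0) : dstar (equiDiff x) = {x, 2 * x, -x, -(2 * x)} := by
  ext y
  simp only [dstar, dset, equiDiff, mem_sdiff, mem_image, mem_product, mem_insert, mem_singleton,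
    Prod.exists]
  constructor
  · rintro ⟨⟨a, b, ⟨rfl | rfl | rfl, rfl | rfl | rfl⟩, rfl⟩, hy⟩ <;> grind
  · rintro (rfl | rfl | rfl | rfl)
    · exact ⟨⟨y, 0, by simp⟩, by grind⟩
    · exact ⟨⟨2 * x, 0, by simp⟩, hx⟩
    · exact ⟨⟨0, x, by simp⟩, by grind⟩
    · exact ⟨⟨0, 2 * x, by simp⟩, by grind⟩

theorem dstar_neg (x : ZMod L) : dstar (equiDiff (-x)) = dstar (equiDiff x) := by
  by_cases hx : 2 * x = 0
  · rw [show -x = x by linear_combination -hx]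
  · rw [dstar_eq hx, dstar_eq (by simpa using hx)]
    grind

theorem one_notMem_dstar_iff (hx : 2 * x ≠ 0) :
    1 ∉ dstar (equiDiff x) ↔ x ≠ 1 ∧ x ≠ -1 ∧ 2 * x ≠ 1 ∧ 2 * x ≠ -1 := by
  rw [dstar_eq hx]
  grind

theorem card_dstar_of_three_mul_eq_zero (hx : 2 * x ≠ 0) (h3 : 3 * x = 0) :
    #(dstar (equiDiff x)) = 2 := by
  have dstar_eq_pair : dstar (equiDiff x) = {x, 2 * x} := by
    rw [dstar_eq hx]
    grind
  have x_ne_two_mul : x ≠ 2 * x := fun h => hx (by linear_combination -2 * h)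
  rw [dstar_eq_pair, card_pair x_ne_two_mul]

theorem card_dstar_of_four_mul_eq_zero (hx : 2 * x ≠ 0) (h4 : 4 * x = 0) :
    #(dstar (equiDiff x)) = 3 := by
  rw [dstar_eq hx, card_eq_three]
  have x_ne_two_mul : x ≠ 2 * x := fun h => hx (by linear_combination -2 * h)
  have x_ne_neg : x ≠ -x := fun h => hx (by linear_combination h)
  have two_mul_ne_neg : 2 * x ≠ -x := fun h => hx (by linear_combination 2 * h - h4)
  exact ⟨x, 2 * x, -x, x_ne_two_mul, x_ne_neg, two_mul_ne_neg, by grind⟩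

theorem card_dstar_of_ne_zero (hx : 2 * x ≠ 0) (h3 : 3 * x ≠ 0) (h4 : 4 * x ≠ 0) :
    #(dstar (equiDiff x)) = 4 := by
  rw [dstar_eq hx, card_insert_of_notMem (by grind), card_insert_of_notMem (by grind),
    card_pair (by grind)]

theorem mem_shiftOverlap_iff (hx : 2 * x ≠ 0) (h1 : 1 ∉ dstar (equiDiff x)) (h4 : 4 * x ≠ 1)
    (h4' : 4 * x ≠ -1) (y : ZMod L) :
    y ∈ shiftOverlap (equiDiff x) ↔
      3 * x = 1 ∧ (y = x ∨ y = 2 * x) ∨ 3 * x = -1 ∧ (y = -x ∨ y = -(2 * x)) := by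
  have one_ne_zero : (1 : ZMod L) ≠ 0 := fun h => hx (by linear_combination 2 * x * h)
  rw [dstar_eq hx] at h1
  simp only [shiftOverlap, dstar_eq hx, mem_inter, mem_image, mem_insert, mem_singleton] at h1 ⊢
  constructor
  · rintro ⟨rfl | rfl | rfl | rfl, z, rfl | rfl | rfl | rfl, hz⟩ <;> grind
  · grind

theorem shiftOverlap_eq_empty (hx : 2 * x ≠ 0) (h1 : 1 ∉ dstar (equiDiff x)) (h4 : 4 * x ≠ 1)
    (h4' : 4 * x ≠ -1) (h3 : 3 * x ≠ 1) (h3' : 3 * x ≠ -1) :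
    shiftOverlap (equiDiff x) = ∅ := by
  ext y
  simp [mem_shiftOverlap_iff hx h1 h4 h4', h3, h3']

theorem card_shiftOverlap_of_three_mul_eq_one (hx : 2 * x ≠ 0) (h1 : 1 ∉ dstar (equiDiff x))
    (h4' : 4 * x ≠ -1) (h3 : 3 * x = 1) : #(shiftOverlap (equiDiff x)) = 2 := by
  have h4 : 4 * x ≠ 1 := by grind
  have one_ne_neg_one : (1 : ZMod L) ≠ -1 := fun h => hx (by linear_combination x * h)
  have overlap_eq_pair : shiftOverlap (equiDiff x) = {x, 2 * x} := by
    ext y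
    simp [mem_shiftOverlap_iff hx h1 h4 h4', h3, one_ne_neg_one]
  rw [overlap_eq_pair, card_pair (by grind)]

theorem card_dplus_of_three_mul_eq_zero (hx : 2 * x ≠ 0) (h1 : 1 ∉ dstar (equiDiff x))
    (h3 : 3 * x = 0) : #(dplus (equiDiff x)) = 4 := by
  have : Nontrivial (ZMod L) := nontrivial_of_ne _ _ hx
  obtain ⟨x_ne_one, x_ne_neg_one, -, -⟩ := (one_notMem_dstar_iff hx).1 h1
  have four_mul_eq : 4 * x = x := by linear_combination h3
  have overlap_eq_empty : shiftOverlap (equiDiff x) = ∅ :=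
    shiftOverlap_eq_empty hx h1 (four_mul_eq.trans_ne x_ne_one) (four_mul_eq.trans_ne x_ne_neg_one)
      (by simp [h3]) (by simp [h3])
  have count := card_dplus_add_card_shiftOverlap (equiDiff x)
  rwa [overlap_eq_empty, card_empty, card_dstar_of_three_mul_eq_zero hx h3] at count

theorem card_dplus_of_four_mul_eq_zero (hx : 2 * x ≠ 0) (h1 : 1 ∉ dstar (equiDiff x))
    (h4 : 4 * x = 0) : #(dplus (equiDiff x)) = 6 := by
  have : Nontrivial (ZMod L) := nontrivial_of_ne _ _ hx
  obtain ⟨x_ne_one, x_ne_neg_one, -, -⟩ := (one_notMem_dstar_iff hx).1 h1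
  have three_mul_ne_one : 3 * x ≠ 1 := fun h => x_ne_neg_one (by linear_combination h4 - h)
  have three_mul_ne_neg_one : 3 * x ≠ -1 := fun h => x_ne_one (by linear_combination h4 - h)
  have overlap_eq_empty : shiftOverlap (equiDiff x) = ∅ :=
    shiftOverlap_eq_empty hx h1 (by simp [h4]) (by simp [h4]) three_mul_ne_one three_mul_ne_neg_one
  have count := card_dplus_add_card_shiftOverlap (equiDiff x)
  rwa [overlap_eq_empty, card_empty, card_dstar_of_four_mul_eq_zero hx h4] at count

theorem card_dplus_of_three_mul_eq_one (hx : 2 * x ≠ 0) (h1 : 1 ∉ dstar (equiDiff x))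
    (h4' : 4 * x ≠ -1) (h3 : 3 * x = 1) : #(dplus (equiDiff x)) = 6 := by
  have : Nontrivial (ZMod L) := nontrivial_of_ne _ _ hx
  obtain ⟨-, x_ne_neg_one, -, -⟩ := (one_notMem_dstar_iff hx).1 h1
  have four_mul_ne_zero : 4 * x ≠ 0 := fun h => x_ne_neg_one (by linear_combination h - h3)
  have count := card_dplus_add_card_shiftOverlap (equiDiff x)
  rw [card_shiftOverlap_of_three_mul_eq_one hx h1 h4' h3,
    card_dstar_of_ne_zero hx (by simp [h3]) four_mul_ne_zero] at count
  omega

theorem card_dplus_of_three_mul_eq_neg_one (hx : 2 * x ≠ 0) (h1 : 1 ∉ dstar (equiDiff x))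
    (h4 : 4 * x ≠ 1) (h3 : 3 * x = -1) : #(dplus (equiDiff x)) = 6 := by
  have dplus_neg : dplus (equiDiff (-x)) = dplus (equiDiff x) := by simp only [dplus, dstar_neg]
  rw [← dstar_neg] at h1
  rw [← dplus_neg]
  exact card_dplus_of_three_mul_eq_one (by simpa using hx) h1 (by grind) (by grind)

theorem card_dplus_of_ne (hx : 2 * x ≠ 0) (h1 : 1 ∉ dstar (equiDiff x)) (h4 : 4 * x ≠ 1)
    (h4' : 4 * x ≠ -1) (h30 : 3 * x ≠ 0) (h40 : 4 * x ≠ 0) (h3 : 3 * x ≠ 1) (h3' : 3 * x ≠ -1) :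
    #(dplus (equiDiff x)) = 8 := by
  have count := card_dplus_add_card_shiftOverlap (equiDiff x)
  rwa [shiftOverlap_eq_empty hx h1 h4 h4' h3 h3', card_empty,
    card_dstar_of_ne_zero hx h30 h40] at count

theorem card_dplus (hx : 2 * x ≠ 0) (h1 : 1 ∉ dstar (equiDiff x)) (h4 : 4 * x ≠ 1)
    (h4' : 4 * x ≠ -1) :
    (3 * x = 0 → #(dplus (equiDiff x)) = 4) ∧
    (4 * x = 0 ∨ 3 * x = 1 ∨ 3 * x = -1 → #(dplus (equiDiff x)) = 6) ∧
    (¬ (3 * x = 0 ∨ 4 * x = 0 ∨ 3 * x = 1 ∨ 3 * x = -1) → #(dplus (equiDiff x)) = 8) := by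
  refine ⟨card_dplus_of_three_mul_eq_zero hx h1, ?_, fun h => ?_⟩
  · rintro (h | h | h)
    · exact card_dplus_of_four_mul_eq_zero hx h1 h
    · exact card_dplus_of_three_mul_eq_one hx h1 h4' h
    · exact card_dplus_of_three_mul_eq_neg_one hx h1 h4 h
  · push Not at h
    obtain ⟨h30, h40, h3, h3'⟩ := h
    exact card_dplus_of_ne hx h1 h4 h4' h30 h40 h3 h3'

end equiDiff

section NatCast

variable {L n : ℕ}

theorem natCast_zmod_eq_zero_iff_eq (hn : n ≠ 0) (hnL : n < 2 * L) :
    (n : ZMod L) = 0 ↔ n = L := by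
  rw [ZMod.natCast_eq_zero_iff]
  exact ⟨fun h => Nat.eq_of_dvd_of_lt_two_mul hn h hnL, fun h => h ▸ dvd_rfl⟩

theorem natCast_zmod_eq_one_iff_eq (hn : 1 < n) (hnL : n ≤ 2 * L) :
    (n : ZMod L) = 1 ↔ n = L + 1 := by
  have pred_eq_iff := natCast_zmod_eq_zero_iff_eq (L := L) (n := n - 1) (by omega) (by omega)
  rw [Nat.cast_sub hn.le, Nat.cast_one, sub_eq_zero] at pred_eq_iff
  rw [pred_eq_iff]
  omega

theorem natCast_zmod_eq_neg_one_iff_eq (hnL : n + 1 < 2 * L) :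
    (n : ZMod L) = -1 ↔ n = L - 1 := by
  have succ_eq_iff := natCast_zmod_eq_zero_iff_eq n.succ_ne_zero hnL
  rw [Nat.cast_succ, ← eq_neg_iff_add_eq_zero] at succ_eq_iff
  rw [succ_eq_iff]
  omega

end NatCast

theorem equidiff_dplus_card_general (L g : ℕ) (hgL : 2 * g ≤ L)
    (I : Finset (ZMod L)) (hI : I = {0, (g : ZMod L), ((2 * g : ℕ) : ZMod L)})
    (hcard : I.card = 3) (h1 : (1 : ZMod L) ∉ dstar I)
    (h4 : 4 * g ≠ L + 1) (h4' : 4 * g ≠ L - 1) :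
    (3 * g = L → (dplus I).card = 4) ∧
    (4 * g = L ∨ 3 * g = L + 1 ∨ 3 * g = L - 1 → (dplus I).card = 6) ∧
    (¬ (3 * g = L ∨ 4 * g = L ∨ 3 * g = L + 1 ∨ 3 * g = L - 1) → (dplus I).card = 8) := by
  obtain rfl : I = equiDiff (g : ZMod L) := by simpa [equiDiff] using hI
  have hx := equiDiff.two_mul_ne_zero_of_card_eq_three hcard
  have hg : 0 < g := Nat.pos_of_ne_zero fun h => hx (by simp [h])
  have hlt : 2 * g < L := hgL.lt_of_ne fun h => hx <| by
    rw [← Nat.cast_ofNat, ← Nat.cast_mul, h, ZMod.natCast_self]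
  have h30 : 3 * (g : ZMod L) = 0 ↔ 3 * g = L := by
    exact_mod_cast natCast_zmod_eq_zero_iff_eq (L := L) (n := 3 * g) (by omega) (by omega)
  have h40 : 4 * (g : ZMod L) = 0 ↔ 4 * g = L := by
    exact_mod_cast natCast_zmod_eq_zero_iff_eq (L := L) (n := 4 * g) (by omega) (by omega)
  have h31 : 3 * (g : ZMod L) = 1 ↔ 3 * g = L + 1 := by
    exact_mod_cast natCast_zmod_eq_one_iff_eq (L := L) (n := 3 * g) (by omega) (by omega)
  have h31' : 3 * (g : ZMod L) = -1 ↔ 3 * g = L - 1 := by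
    exact_mod_cast natCast_zmod_eq_neg_one_iff_eq (L := L) (n := 3 * g) (by omega)
  replace h4 : 4 * (g : ZMod L) ≠ 1 := by
    exact_mod_cast mt (natCast_zmod_eq_one_iff_eq (by omega) (by omega)).1 h4
  replace h4' : 4 * (g : ZMod L) ≠ -1 := by
    exact_mod_cast mt (natCast_zmod_eq_neg_one_iff_eq (by omega)).1 h4'
  rw [← h30, ← h40, ← h31, ← h31']
  exact equiDiff.card_dplus hx h1 h4 h4'

theorem equidiff_dplus_card (L g : ℕ) (hL6 : 6 ≤ L) (hL : Even L)
    (hg : 2 ≤ g) (hgL : 2 * g ≤ L)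
    (I : Finset (ZMod L)) (hI : I = {0, (g : ZMod L), ((2 * g : ℕ) : ZMod L)})
    (hcard : I.card = 3)
    (h1 : (1 : ZMod L) ∉ dstar I) (h2 : (-1 : ZMod L) ∉ dstar I) :
    (3 * g = L → (dplus I).card = 4) ∧
    (4 * g = L ∨ 3 * g = L + 1 ∨ 3 * g = L - 1 → (dplus I).card = 6) ∧
    (¬ (3 * g = L ∨ 4 * g = L ∨ 3 * g = L + 1 ∨ 3 * g = L - 1) → (dplus I).card = 8) := by
  obtain ⟨k, rfl⟩ := hL
  exact equidiff_dplus_card_general (k + k) g hgL I hI hcard h1 (by omega) (by omega)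
end

section
/- For every even integer L ≥ 18: if L ≡ 0 (mod 12), then M_S(L,3) ≤ ⌊(L+4)/8⌋; if L ≡ 4, 6, or 8 (mod 12), then M_S(L,3) ≤ ⌊(L+2)/8⌋; and if L ≡ 2 or 10 (mod 12), then M_S(L,3) ≤ ⌊L/8⌋. -/
open Finset

/-- A strongly conflict-avoiding code of length `L` and weight `ω`. -/
def IsSCAC (L ω : ℕ) (C : Finset (Finset (ZMod L))) : Prop :=
  (∀ I ∈ C, I.card = ω) ∧
  (∀ I ∈ C, (1 : ZMod L) ∉ dstar I ∧ (-1 : ZMod L) ∉ dstar I) ∧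
  ∀ I ∈ C, ∀ J ∈ C, I ≠ J → Disjoint (dplus I) (dplus J)

/-- `M_S(L,ω)`: the maximum size of an SCAC of length `L` and weight `ω`. -/
noncomputable def MS (L ω : ℕ) : ℕ :=
  sSup {n | ∃ C : Finset (Finset (ZMod L)), IsSCAC L ω C ∧ C.card = n}

open scoped Pointwise

/-!
Let `C` be a code of weight 3 and `L` even. The sets `d⁺(I)`, `I ∈ C`, are disjoint and avoid
`0` and `1`, so their sizes sum to at most `L - 2`. Each size is even, since `x ↦ 1 - x` preserves
`d⁺(I)` and has no fixed point, and exceeds `#d*(I)`, since a nonempty proper subset of `ℤ_L` is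
not closed under `x ↦ x + 1`.

If `a, b, c` are the successive differences of `I`, then `a + b + c = 0` and
`d*(I) = {±a, ±b, ±c}`. When this set has six elements, `#d⁺(I) ≥ 8`. Otherwise one of `a, b, c` is
`L / 2`, or two of them agree, and still `#d⁺(I) ≥ 8` unless `d*(I)` contains an element of order 4
or an inverse of 3 (then `#d⁺(I) ≥ 6`) or an element of order 3 (then `#d⁺(I) ≥ 4`). Each kind of
element is unique up to sign, so it occurs in at most one codeword.
-/

section CyclicGroup

lemma eq_or_eq_neg_of_addOrderOf_eq {G : Type*} [AddGroup G] [IsAddCyclic G] [Finite G] {n : ℕ}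
    (hn : n.totient ≤ 2) {x y : G} (hx : addOrderOf x = n) (hy : addOrderOf y = n) :
    y = x ∨ y = -x := by
  classical
  have := Fintype.ofFinite G
  have card_order_n : #{z : G | addOrderOf z = n} = n.totient :=
    IsAddCyclic.card_addOrderOf_eq_totient (hx ▸ addOrderOf_dvd_card)
  by_contra! ⟨hyx, hynx⟩
  by_cases hx_neg : x = -x
  · have n_dvd_two : n ∣ 2 := by
      rw [← hx, addOrderOf_dvd_iff_nsmul_eq_zero, two_nsmul]
      exact add_eq_zero_iff_eq_neg.2 hx_neg
    have totient_n : n.totient = 1 := by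
      obtain rfl | rfl := (Nat.dvd_prime Nat.prime_two).1 n_dvd_two <;> rfl
    have pair_subset : {x, y} ⊆ ({z : G | addOrderOf z = n} : Finset G) := by
      simp [insert_subset_iff, hx, hy]
    have := card_le_card pair_subset
    rw [card_pair hyx.symm] at this
    omega
  · have triple_subset : {x, -x, y} ⊆ ({z : G | addOrderOf z = n} : Finset G) := by
      simp [insert_subset_iff, hx, hy]
    have := card_le_card triple_subset
    rw [card_eq_three.2 ⟨x, -x, y, hx_neg, hyx.symm, hynx.symm, rfl⟩] at this
    omega

lemma eq_of_add_self_eq_zero {G : Type*} [AddGroup G] [IsAddCyclic G] [Finite G] {x y : G}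
    (hx : x ≠ 0) (hy : y ≠ 0) (hxx : x + x = 0) (hyy : y + y = 0) : x = y := by
  have order_two {z : G} (hz : z ≠ 0) (hzz : z + z = 0) : addOrderOf z = 2 :=
    addOrderOf_eq_prime (by rwa [two_nsmul]) hz
  obtain h | h := eq_or_eq_neg_of_addOrderOf_eq (by decide) (order_two hy hyy) (order_two hx hxx)
  exacts [h, h.trans (neg_eq_of_add_eq_zero_left hyy)]

end CyclicGroup

section Symmetrize

variable {R : Type*} [AddCommGroup R] [DecidableEq R]

/-- The symmetric closure `T ∪ -T`. The nonzero differences of a codeword `{x, y, z}` form the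
symmetrization of `{x - y, y - z, z - x}`. -/
def symmetrize (T : Finset R) : Finset R := T ∪ -T

lemma mem_symmetrize {T : Finset R} {x : R} : x ∈ symmetrize T ↔ x ∈ T ∨ -x ∈ T := by
  simp [symmetrize]

lemma neg_mem_symmetrize {T : Finset R} {x : R} : -x ∈ symmetrize T ↔ x ∈ symmetrize T := by
  simp [mem_symmetrize, or_comm]

lemma symmetrize_mono {T U : Finset R} (h : T ⊆ U) : symmetrize T ⊆ symmetrize U :=
  union_subset_union h (neg_subset_neg h)

lemma disjoint_neg_iff {T : Finset R} : Disjoint T (-T) ↔ ∀ x ∈ T, ∀ y ∈ T, x + y ≠ 0 := by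
  simp only [disjoint_left, mem_neg', ne_eq, add_eq_zero_iff_neg_eq]
  grind

lemma disjoint_neg_pair {a b : R} (ha : a + a ≠ 0) (hb : b + b ≠ 0) (hab : a + b ≠ 0) :
    Disjoint ({a, b} : Finset R) (-{a, b}) := by
  rw [disjoint_neg_iff]
  simp [ha, hb, hab, add_comm b a]

lemma card_symmetrize_of_disjoint {T : Finset R} (h : Disjoint T (-T)) :
    #(symmetrize T) = 2 * #T := by
  rw [symmetrize, card_union_of_disjoint h, card_neg, two_mul]

end Symmetrize

section Thicken

/-- The set `S ∪ (S + 1)`, so that `d⁺(I)` is the thickening of `d*(I)`. -/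
def thicken {R : Type*} [Add R] [One R] [DecidableEq R] (S : Finset R) : Finset R :=
  S ∪ S.image (· + 1)

variable {R : Type*} [CommRing R] [DecidableEq R]

lemma mem_thicken {S : Finset R} {x : R} : x ∈ thicken S ↔ x ∈ S ∨ x - 1 ∈ S := by
  simp [thicken, sub_eq_add_neg]

lemma card_thicken_of_disjoint {S : Finset R} (h : Disjoint S (S.image (· + 1))) :
    #(thicken S) = 2 * #S := by
  rw [thicken, card_union_of_disjoint h, card_image_of_injective _ (add_left_injective 1), two_mul]

lemma card_thicken_insert [Nontrivial R] {S : Finset R} {c : R} (hc : c ∉ S)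
    (hc_add : c + 1 ∉ S) (hc_sub : c - 1 ∉ S) : #(thicken (insert c S)) = #(thicken S) + 2 := by
  have thicken_insert : thicken (insert c S) = insert c (insert (c + 1) (thicken S)) := by
    ext x
    simp only [mem_thicken, mem_insert, sub_eq_iff_eq_add]
    tauto
  rw [thicken_insert, card_insert_of_notMem, card_insert_of_notMem]
  · simpa [mem_thicken] using ⟨hc_add, hc⟩
  · simpa [mem_thicken] using ⟨hc, hc_sub⟩

lemma even_card_thicken_symmetrize (h2 : ¬IsUnit (2 : R)) (T : Finset R) :
    Even #(thicken (symmetrize T)) := by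
  have reflection_mem (x : R) (hx : x ∈ thicken (symmetrize T)) :
      1 - x ∈ thicken (symmetrize T) := by
    rw [mem_thicken, ← neg_mem_symmetrize, neg_sub, ← neg_mem_symmetrize (x := 1 - x - 1)]
    simpa [mem_thicken, or_comm] using hx
  have reflection_ne (x : R) : 1 - x ≠ x := fun h =>
    h2 (isUnit_iff_exists_inv.2 ⟨x, by linear_combination -h⟩)
  have sum_one_eq_zero : ∑ _x ∈ thicken (symmetrize T), (1 : ZMod 2) = 0 :=
    sum_involution (fun x _ => 1 - x) (fun _ _ => by decide) (fun x _ _ => reflection_ne x)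
      reflection_mem (fun x _ => sub_sub_cancel 1 x)
  simpa [ZMod.natCast_eq_zero_iff_even] using sum_one_eq_zero

lemma card_thicken_symmetrize_of_two_mul_eq_zero {a b c : R} (habc : a + b + c = 0) (ha : a ≠ 0)
    (hb : b ≠ 0) (hc : c ≠ 0) (h2c : 2 * c = 0) (h1 : 1 ∉ symmetrize {a, b, c}) :
    #(thicken (symmetrize {a, b, c})) = #(thicken (symmetrize {a, b})) + 2 := by
  have : Nontrivial R := ⟨c, 0, hc⟩
  have symmetrize_eq : symmetrize {a, b, c} = insert c (symmetrize {a, b}) := by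
    ext x
    simp only [mem_symmetrize, mem_insert, mem_singleton]
    grind
  simp only [mem_symmetrize, mem_insert, mem_singleton] at h1
  rw [symmetrize_eq, card_thicken_insert] <;>
    simp only [mem_symmetrize, mem_insert, mem_singleton] <;> grind

lemma disjoint_symmetrize_double_image_add_one {a : R} (h2 : ¬IsUnit (2 : R))
    (h3 : 3 * a ≠ 1) (h3_neg : 3 * -a ≠ 1) (h1 : 1 ∉ symmetrize {a, 2 * a}) :
    Disjoint (symmetrize {a, 2 * a}) ((symmetrize {a, 2 * a}).image (· + 1)) := by
  have two_mul_ne_one (x : R) : 2 * x ≠ 1 := fun h => h2 (isUnit_iff_exists_inv.2 ⟨x, h⟩)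
  have := two_mul_ne_one (2 * a)
  have := two_mul_ne_one (2 * -a)
  have : (1 : R) ≠ 0 := fun h => two_mul_ne_one 0 (by simp [h])
  simp only [mem_symmetrize, mem_insert, mem_singleton] at h1
  simp only [disjoint_left, mem_image, mem_symmetrize, mem_insert, mem_singleton]
  grind

end Thicken

section Allowance

variable {L : ℕ}

/-- The loss in `8 ≤ #(thicken S)` that is tolerated on account of exceptional elements of `S`:
those of order 3, those of order 4 and the inverse of 3. -/
noncomputable def allowance (S : Finset (ZMod L)) : ℕ :=
  (if ∃ x ∈ S, addOrderOf x = 3 then 4 else 0) + (if ∃ x ∈ S, addOrderOf x = 4 then 2 else 0) +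
    (if ∃ x ∈ S, 3 * x = 1 then 2 else 0)

lemma four_le_allowance {S : Finset (ZMod L)} {x : ZMod L} (hx : x ∈ S) (h : addOrderOf x = 3) :
    4 ≤ allowance S := by
  rw [allowance, if_pos ⟨x, hx, h⟩]
  omega

lemma two_le_allowance {S : Finset (ZMod L)} {x : ZMod L} (hx : x ∈ S)
    (h : addOrderOf x = 4 ∨ 3 * x = 1) : 2 ≤ allowance S := by
  obtain h | h := h
  · rw [allowance, if_pos (c := ∃ x ∈ S, addOrderOf x = 4) ⟨x, hx, h⟩]
    omega
  · rw [allowance, if_pos (c := ∃ x ∈ S, 3 * x = 1) ⟨x, hx, h⟩]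
    omega

end Allowance

section ZMod

variable {L : ℕ} [NeZero L]

lemma card_lt_card_thicken {S : Finset (ZMod L)} (hne : S.Nonempty) (hS : S ≠ univ) :
    #S < #(thicken S) := by
  refine card_lt_card ⟨subset_union_left, fun thicken_subset => hS ?_⟩
  obtain ⟨x, hx⟩ := hne
  have add_natCast_mem (n : ℕ) : x + n ∈ S := by
    induction n with
    | zero => simpa using hx
    | succ n ih =>
      exact thicken_subset (mem_thicken.2 (.inr (by simpa [← add_assoc] using ih)))
  refine eq_univ_of_forall fun y => ?_
  simpa using add_natCast_mem (y - x).val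

lemma two_mul_card_add_two_le_card_thicken_symmetrize (h2 : ¬IsUnit (2 : ZMod L))
    {T U : Finset (ZMod L)} (h0 : 0 ∉ T) (hUT : U ⊆ T) (hU : U.Nonempty) (hdisj : Disjoint U (-U)) :
    2 * #U + 2 ≤ #(thicken (symmetrize T)) := by
  have card_le : 2 * #U ≤ #(symmetrize T) := by
    rw [← card_symmetrize_of_disjoint hdisj]
    exact card_le_card (symmetrize_mono hUT)
  have card_lt : #(symmetrize T) < #(thicken (symmetrize T)) :=
    card_lt_card_thicken ((hU.mono hUT).mono subset_union_left)
      fun h => h0 (by simpa [mem_symmetrize] using h.ge (mem_univ 0))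
  have := even_card_thicken_symmetrize h2 T
  grind

variable {a b c : ZMod L}

lemma four_le_card_thicken_symmetrize (h2 : ¬IsUnit (2 : ZMod L)) {T : Finset (ZMod L)}
    (h0 : 0 ∉ T) (ha : a ∈ T) (h2a : 2 * a ≠ 0) : 4 ≤ #(thicken (symmetrize T)) :=
  two_mul_card_add_two_le_card_thicken_symmetrize h2 h0 (singleton_subset_iff.2 ha)
    (singleton_nonempty a)
    (disjoint_neg_iff.2 (by simpa only [mem_singleton, forall_eq, ← two_mul]))

lemma six_le_card_thicken_symmetrize_pair (h2 : ¬IsUnit (2 : ZMod L)) (h2a : 2 * a ≠ 0)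
    (h2b : 2 * b ≠ 0) (hab : a ≠ b) (hab_add : a + b ≠ 0) :
    6 ≤ #(thicken (symmetrize {a, b})) := by
  have := two_mul_card_add_two_le_card_thicken_symmetrize h2 (T := {a, b}) (by grind)
    Subset.rfl (insert_nonempty _ _)
    (disjoint_neg_pair (by rwa [← two_mul]) (by rwa [← two_mul]) hab_add)
  rwa [card_pair hab] at this

lemma eight_le_card_thicken_of_ne (h2 : ¬IsUnit (2 : ZMod L)) (habc : a + b + c = 0)
    (h2a : 2 * a ≠ 0) (h2b : 2 * b ≠ 0) (h2c : 2 * c ≠ 0)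
    (hab : a ≠ b) (hbc : b ≠ c) (hca : c ≠ a) : 8 ≤ #(thicken (symmetrize {a, b, c})) := by
  have card_three : #{a, b, c} = 3 := card_eq_three.2 ⟨a, b, c, hab, hca.symm, hbc, rfl⟩
  have := two_mul_card_add_two_le_card_thicken_symmetrize h2 (T := {a, b, c}) (by grind)
    Subset.rfl (insert_nonempty _ _) (disjoint_neg_iff.2 (by grind))
  omega

lemma eight_le_card_thicken_add_allowance_of_two_mul_eq_zero (h2 : ¬IsUnit (2 : ZMod L))
    (habc : a + b + c = 0) (ha : a ≠ 0) (hb : b ≠ 0) (hc : c ≠ 0) (h2c : 2 * c = 0)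
    (h1 : 1 ∉ symmetrize {a, b, c}) :
    8 ≤ #(thicken (symmetrize {a, b, c})) + allowance (symmetrize {a, b, c}) := by
  rw [card_thicken_symmetrize_of_two_mul_eq_zero habc ha hb hc h2c h1]
  have two_mul_ne_zero {x : ZMod L} (hx : x ≠ 0) (hxc : x ≠ c) : 2 * x ≠ 0 := fun h2x =>
    hxc (eq_of_add_self_eq_zero hx hc (by rwa [← two_mul]) (by rwa [← two_mul]))
  have h2a : 2 * a ≠ 0 := two_mul_ne_zero ha (by grind)
  have h2b : 2 * b ≠ 0 := two_mul_ne_zero hb (by grind)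
  by_cases hab : a = b
  · have order_four : addOrderOf a = 2 ^ (1 + 1) :=
      addOrderOf_eq_prime_pow (by simpa using h2a) (by norm_num; grind)
    have := two_le_allowance (S := symmetrize {a, b, c}) (x := a) (by simp [mem_symmetrize])
      (.inl order_four)
    have := four_le_card_thicken_symmetrize h2 (T := {a, b}) (by grind) (by simp) h2a
    omega
  · have := six_le_card_thicken_symmetrize_pair h2 h2a h2b hab (by grind)
    omega

lemma eight_le_card_thicken_add_allowance_double (h2 : ¬IsUnit (2 : ZMod L)) (h4a : 4 * a ≠ 0)
    (h1 : 1 ∉ symmetrize {a, 2 * a}) :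
    8 ≤ #(thicken (symmetrize {a, 2 * a})) + allowance (symmetrize {a, 2 * a}) := by
  have h2a : 2 * a ≠ 0 := by grind
  have ha : a ≠ 0 := by grind
  have a_mem : a ∈ symmetrize {a, 2 * a} := by simp [mem_symmetrize]
  by_cases h3 : 3 * a = 0
  · have := four_le_allowance a_mem (addOrderOf_eq_prime (by simpa using h3) ha)
    have := four_le_card_thicken_symmetrize h2 (T := {a, 2 * a}) (by grind) (by simp) h2a
    omega
  by_cases h3_unit : 3 * a = 1 ∨ 3 * -a = 1
  · have : 2 ≤ allowance (symmetrize {a, 2 * a}) := by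
      obtain h | h := h3_unit
      · exact two_le_allowance a_mem (.inr h)
      · exact two_le_allowance (neg_mem_symmetrize.2 a_mem) (.inr h)
    have := six_le_card_thicken_symmetrize_pair h2 h2a (b := 2 * a) (by grind) (by grind) (by grind)
    omega
  · push Not at h3_unit
    have disjoint_neg : Disjoint ({a, 2 * a} : Finset (ZMod L)) (-{a, 2 * a}) :=
      disjoint_neg_pair (by rwa [← two_mul]) (by grind) (by grind)
    rw [card_thicken_of_disjoint
        (disjoint_symmetrize_double_image_add_one h2 h3_unit.1 h3_unit.2 h1),
      card_symmetrize_of_disjoint disjoint_neg, card_pair (by grind)]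
    omega

lemma eight_le_card_thicken_add_allowance_of_eq (h2 : ¬IsUnit (2 : ZMod L)) (hac : 2 * a + c = 0)
    (h2c : 2 * c ≠ 0) (h1 : 1 ∉ symmetrize {a, a, c}) :
    8 ≤ #(thicken (symmetrize {a, a, c})) + allowance (symmetrize {a, a, c}) := by
  have symmetrize_eq : symmetrize {a, a, c} = symmetrize {a, 2 * a} := by
    ext x
    simp only [mem_symmetrize, mem_insert, mem_singleton]
    grind
  rw [symmetrize_eq] at h1 ⊢
  exact eight_le_card_thicken_add_allowance_double h2 (by grind) h1

theorem eight_le_card_thicken_add_allowance (h2 : ¬IsUnit (2 : ZMod L)) (habc : a + b + c = 0)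
    (ha : a ≠ 0) (hb : b ≠ 0) (hc : c ≠ 0) (h1 : 1 ∉ symmetrize {a, b, c}) :
    8 ≤ #(thicken (symmetrize {a, b, c})) + allowance (symmetrize {a, b, c}) := by
  have rotate : ({a, b, c} : Finset (ZMod L)) = {b, c, a} := by grind
  have rotate' : ({a, b, c} : Finset (ZMod L)) = {c, a, b} := by grind
  by_cases h2a : 2 * a = 0
  · rw [rotate] at h1 ⊢
    exact eight_le_card_thicken_add_allowance_of_two_mul_eq_zero h2 (by grind) hb hc ha h2a h1
  by_cases h2b : 2 * b = 0
  · rw [rotate'] at h1 ⊢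
    exact eight_le_card_thicken_add_allowance_of_two_mul_eq_zero h2 (by grind) hc ha hb h2b h1
  by_cases h2c : 2 * c = 0
  · exact eight_le_card_thicken_add_allowance_of_two_mul_eq_zero h2 habc ha hb hc h2c h1
  by_cases hab : a = b
  · subst hab
    exact eight_le_card_thicken_add_allowance_of_eq h2 (by grind) h2c h1
  by_cases hbc : b = c
  · subst hbc
    rw [rotate] at h1 ⊢
    exact eight_le_card_thicken_add_allowance_of_eq h2 (by grind) h2a h1
  by_cases hca : c = a
  · subst hca
    rw [rotate'] at h1 ⊢
    exact eight_le_card_thicken_add_allowance_of_eq h2 (by grind) h2b h1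
  exact le_add_right (eight_le_card_thicken_of_ne h2 habc h2a h2b h2c hab hbc hca)

end ZMod

section Codeword

variable {L : ℕ} {I : Finset (ZMod L)} {x : ZMod L}

lemma dplus_eq_thicken_dstar : dplus I = thicken (dstar I) := rfl

lemma mem_dstar_s6 : x ∈ dstar I ↔ x ≠ 0 ∧ ∃ p ∈ I, ∃ q ∈ I, p - q = x := by
  simp only [dstar, dset, mem_sdiff, mem_image, mem_product, mem_singleton, Prod.exists]
  grind

lemma neg_mem_dstar (hx : x ∈ dstar I) : -x ∈ dstar I := by
  obtain ⟨hx0, p, hp, q, hq, rfl⟩ := mem_dstar_s6.1 hx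
  exact mem_dstar_s6.2 ⟨neg_ne_zero.2 hx0, q, hq, p, hp, (neg_sub p q).symm⟩

lemma dstar_triple_s6 {x y z : ZMod L} (hxy : x ≠ y) (hyz : y ≠ z) (hzx : z ≠ x) :
    dstar {x, y, z} = symmetrize {x - y, y - z, z - x} := by
  ext t
  simp only [mem_dstar_s6, mem_symmetrize, mem_insert, mem_singleton, exists_eq_or_imp, exists_eq_left]
  grind

lemma eight_le_card_dplus_add_allowance [NeZero L] (h2 : ¬IsUnit (2 : ZMod L)) (hI : #I = 3)
    (h1 : 1 ∉ dstar I) : 8 ≤ #(dplus I) + allowance (dstar I) := by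
  obtain ⟨x, y, z, hxy, hxz, hyz, rfl⟩ := card_eq_three.1 hI
  rw [dplus_eq_thicken_dstar]
  rw [dstar_triple_s6 hxy hyz hxz.symm] at h1 ⊢
  exact eight_le_card_thicken_add_allowance h2 (by ring) (sub_ne_zero.2 hxy) (sub_ne_zero.2 hyz)
    (sub_ne_zero.2 hxz.symm) h1

lemma dplus_subset_compl [NeZero L] (h1 : 1 ∉ dstar I) : dplus I ⊆ {0, 1}ᶜ := by
  have h0 : (0 : ZMod L) ∉ dstar I := by simp [mem_dstar_s6]
  have h1_neg : -1 ∉ dstar I := fun h => h1 (by simpa using neg_mem_dstar h)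
  intro x hx
  rw [dplus_eq_thicken_dstar, mem_thicken] at hx
  simp only [mem_compl, mem_insert, mem_singleton]
  grind

end Codeword

namespace IsSCAC

variable {L ω : ℕ} {C : Finset (Finset (ZMod L))}

lemma sum_card_dplus_add_two_le [NeZero L] (hL : L ≠ 1) (hC : IsSCAC L ω C) :
    ∑ I ∈ C, #(dplus I) + 2 ≤ L := by
  have : Nontrivial (ZMod L) := ZMod.nontrivial_iff.2 hL
  have union_subset : C.biUnion dplus ⊆ {0, 1}ᶜ :=
    biUnion_subset.2 fun I hI => dplus_subset_compl (hC.2.1 I hI).1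
  calc ∑ I ∈ C, #(dplus I) + 2
      = #(C.biUnion dplus) + #({0, 1} : Finset (ZMod L)) := by
        rw [card_biUnion hC.2.2, card_pair zero_ne_one]
    _ ≤ #({0, 1}ᶜ : Finset (ZMod L)) + #({0, 1} : Finset (ZMod L)) := by gcongr
    _ = L := by rw [card_compl_add_card, ZMod.card]

lemma card_filter_exists_mem_dstar_le_one (hC : IsSCAC L ω C) {Q : ZMod L → Prop} [DecidablePred Q]
    (hQ : ∀ x y, Q x → Q y → y = x ∨ y = -x) : #{I ∈ C | ∃ x ∈ dstar I, Q x} ≤ 1 := by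
  refine card_le_one.2 fun I hI J hJ => ?_
  obtain ⟨hI, x, hxI, hx⟩ := mem_filter.1 hI
  obtain ⟨hJ, y, hyJ, hy⟩ := mem_filter.1 hJ
  have hyI : y ∈ dstar I := by
    obtain rfl | rfl := hQ x y hx hy
    exacts [hxI, neg_mem_dstar hxI]
  by_contra hIJ
  exact disjoint_left.1 (hC.2.2 I hI J hJ hIJ) (mem_union_left _ hyI) (mem_union_left _ hyJ)

lemma card_filter_addOrderOf_eq_le [NeZero L] (hC : IsSCAC L ω C) {n : ℕ} (hn : n.totient ≤ 2) :
    #{I ∈ C | ∃ x ∈ dstar I, addOrderOf x = n} ≤ if n ∣ L then 1 else 0 := by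
  split_ifs with hnL
  · exact hC.card_filter_exists_mem_dstar_le_one fun _ _ => eq_or_eq_neg_of_addOrderOf_eq hn
  · refine (card_eq_zero.2 (filter_eq_empty_iff.2 ?_)).le
    rintro I - ⟨x, -, rfl⟩
    exact hnL (by simpa using addOrderOf_dvd_card (x := x))

lemma card_filter_natCast_mul_eq_one_le (hC : IsSCAC L ω C) (n : ℕ) :
    #{I ∈ C | ∃ x ∈ dstar I, (n : ZMod L) * x = 1} ≤ if n.Coprime L then 1 else 0 := by
  split_ifs with hnL
  · exact hC.card_filter_exists_mem_dstar_le_one fun x y hx hy =>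
      .inl (by linear_combination x * hy - y * hx)
  · refine (card_eq_zero.2 (filter_eq_empty_iff.2 ?_)).le
    rintro I - ⟨x, -, hx⟩
    exact hnL ((ZMod.isUnit_iff_coprime n L).1 (isUnit_iff_exists_inv.2 ⟨x, hx⟩))

lemma sum_allowance_le [NeZero L] (hC : IsSCAC L ω C) :
    ∑ I ∈ C, allowance (dstar I) ≤ (if 3 ∣ L then 4 else 2) + (if 4 ∣ L then 2 else 0) := by
  have order_three := hC.card_filter_addOrderOf_eq_le (n := 3) (by decide)
  have order_four := hC.card_filter_addOrderOf_eq_le (n := 4) (by decide)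
  have inverse_three := hC.card_filter_natCast_mul_eq_one_le 3
  simp only [Nat.prime_three.coprime_iff_not_dvd, Nat.cast_ofNat] at inverse_three
  simp only [allowance, sum_add_distrib, ← sum_filter, sum_const, smul_eq_mul]
  split_ifs at * <;> omega

theorem eight_mul_card_add_two_le [NeZero L] (hE : Even L) (hC : IsSCAC L 3 C) :
    8 * #C + 2 ≤ L + ((if 3 ∣ L then 4 else 2) + (if 4 ∣ L then 2 else 0)) := by
  have h2 : ¬IsUnit (2 : ZMod L) := by
    rw [← Nat.cast_ofNat, ZMod.isUnit_iff_coprime, Nat.coprime_two_left]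
    exact Nat.not_odd_iff_even.2 hE
  calc 8 * #C + 2
      = ∑ _I ∈ C, 8 + 2 := by rw [sum_const, smul_eq_mul, mul_comm]
    _ ≤ ∑ I ∈ C, (#(dplus I) + allowance (dstar I)) + 2 := by
        gcongr with I hI
        exact eight_le_card_dplus_add_allowance h2 (hC.1 I hI) (hC.2.1 I hI).1
    _ = (∑ I ∈ C, #(dplus I) + 2) + ∑ I ∈ C, allowance (dstar I) := by
        rw [sum_add_distrib, add_right_comm]
    _ ≤ _ := add_le_add (hC.sum_card_dplus_add_two_le (by grind)) hC.sum_allowance_le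

end IsSCAC

lemma MS_le_of_forall_card_le {L ω B : ℕ} (h : ∀ C, IsSCAC L ω C → #C ≤ B) : MS L ω ≤ B :=
  csSup_le' (by rintro _ ⟨C, hC, rfl⟩; exact h C hC)

theorem MS_upper_mod12_general (L : ℕ) (hL : L ≠ 0) :
    (L % 12 = 0 → MS L 3 ≤ (L + 4) / 8) ∧
    (L % 12 = 4 ∨ L % 12 = 6 ∨ L % 12 = 8 → MS L 3 ≤ (L + 2) / 8) ∧
    (L % 12 = 2 ∨ L % 12 = 10 → MS L 3 ≤ L / 8) := by
  have : NeZero L := ⟨hL⟩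
  refine ⟨fun h => ?_, fun h => ?_, fun h => ?_⟩ <;>
  · refine MS_le_of_forall_card_le fun C hC => ?_
    have := hC.eight_mul_card_add_two_le (Nat.even_iff.2 (by omega))
    split_ifs at this <;> omega

theorem MS_upper_mod12 (L : ℕ) (hL : 18 ≤ L) (hE : Even L) :
    (L % 12 = 0 → MS L 3 ≤ (L + 4) / 8) ∧
    (L % 12 = 4 ∨ L % 12 = 6 ∨ L % 12 = 8 → MS L 3 ≤ (L + 2) / 8) ∧
    (L % 12 = 2 ∨ L % 12 = 10 → MS L 3 ≤ L / 8) :=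
  MS_upper_mod12_general L (by omega)
end

section
/- Let L ≥ 2 and ω ≥ 1 be integers and let C be a CAC of length L and weight ω with |C| = M. For each I ∈ C, let 2I = {2t mod 2L : t ∈ I} ⊆ Z_{2L} (this is well defined, taking any integer representative t of each element of Z_L). Then {2I : I ∈ C} is an SCAC of length 2L and weight ω consisting of M codewords; in particular, M_S(2L, ω) ≥ M(L, ω). -/
open Finset

/-- A conflict-avoiding code of length `L` and weight `ω`. -/
def IsCAC (L ω : ℕ) (C : Finset (Finset (ZMod L))) : Prop :=
  (∀ I ∈ C, I.card = ω) ∧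
  ∀ I ∈ C, ∀ J ∈ C, I ≠ J → Disjoint (dstar I) (dstar J)

/-- `M(L,ω)`: the maximum size of a CAC of length `L` and weight `ω`. -/
noncomputable def MCAC (L ω : ℕ) : ℕ :=
  sSup {n | ∃ C : Finset (Finset (ZMod L)), IsCAC L ω C ∧ C.card = n}

/-- Doubling a codeword: `2I = {2t mod 2L : t ∈ I} ⊆ ℤ_{2L}`. -/
def double {L : ℕ} (I : Finset (ZMod L)) : Finset (ZMod (2 * L)) :=
  I.image fun t => ((2 * t.val : ℕ) : ZMod (2 * L))

/-!
Doubling is an injective homomorphism `f : ℤ_L → ℤ_{2L}`, so it carries nonzero differences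
bijectively to nonzero differences: `d*(f(I)) = f(d*(I))`. Its range is the subgroup of even
residues, which does not contain `1`. Hence `±1` are never differences of `f(I)`, and `d⁺(f(I))` is
split between the even residues and the coset of odd ones, so that disjointness of `d⁺` can be
checked in each coset separately, where it is disjointness of `d*`.
-/

/-- Multiplication by `k` as a homomorphism `ℤ_L → ℤ_{kL}`, induced from `n ↦ k * n` on `ℤ`. For
`k = 2` and `L ≠ 0` it is the map underlying `double` (at `L = 0`, `ZMod.val` is the absolute value
on `ℤ`, and the two differ). -/
def dilation (k L : ℕ) : ZMod L →+ ZMod (k * L) :=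
  ZMod.lift L ⟨(Int.castAddHom (ZMod (k * L))).comp (AddMonoidHom.mulLeft (k : ℤ)),
    (ZMod.intCast_zmod_eq_zero_iff_dvd (k * L) (k * L)).2 (by simp)⟩

section Dilation

variable {k L : ℕ}

lemma dilation_intCast (n : ℤ) : dilation k L (n : ZMod L) = ((k * n : ℤ) : ZMod (k * L)) :=
  ZMod.lift_coe L _ n

lemma dilation_injective (hk : k ≠ 0) : Function.Injective (dilation k L) := by
  refine (ZMod.lift_injective L).2 fun n hn => ?_
  have hdvd : (k * L : ℤ) ∣ k * n := by
    simpa using (ZMod.intCast_zmod_eq_zero_iff_dvd (k * n) (k * L)).1 hn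
  exact (ZMod.intCast_zmod_eq_zero_iff_dvd n L).2
    (Int.dvd_of_mul_dvd_mul_left (mod_cast hk) hdvd)

lemma one_notMem_range_dilation (hk : k ≠ 1) : 1 ∉ (dilation k L).range := by
  rintro ⟨t, ht⟩
  obtain ⟨n, rfl⟩ := ZMod.intCast_surjective t
  rw [dilation_intCast, ← Int.cast_one, ZMod.intCast_eq_intCast_iff_dvd_sub] at ht
  have hdvd_sub : (k : ℤ) ∣ 1 - k * n := dvd_trans (by simp) ht
  have hdvd_one : (k : ℤ) ∣ 1 := (dvd_sub_left (dvd_mul_right _ n)).1 hdvd_sub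
  exact hk (Nat.dvd_one.1 (mod_cast hdvd_one))

lemma double_eq_image_dilation [NeZero L] :
    (double : Finset (ZMod L) → Finset (ZMod (2 * L))) = image (dilation 2 L) := by
  funext I
  refine image_congr fun t _ => ?_
  conv_rhs => rw [← ZMod.natCast_zmod_val t, ← Int.cast_natCast, dilation_intCast]
  push_cast
  rfl

end Dilation

lemma disjoint_union_image_add_right {G : Type*} [AddGroup G] [DecidableEq G] {H : AddSubgroup G}
    {a : G} (ha : a ∉ H) {s t : Finset G} (hs : ∀ x ∈ s, x ∈ H) (ht : ∀ x ∈ t, x ∈ H)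
    (hst : Disjoint s t) : Disjoint (s ∪ s.image (· + a)) (t ∪ t.image (· + a)) := by
  have disjoint_shift {u v : Finset G} (hu : ∀ x ∈ u, x ∈ H) (hv : ∀ x ∈ v, x ∈ H) :
      Disjoint u (v.image (· + a)) := by
    refine disjoint_left.2 fun x hx hx' => ?_
    obtain ⟨y, hy, rfl⟩ := mem_image.1 hx'
    exact ha ((H.add_mem_cancel_left (hv y hy)).1 (hu _ hx))
  simp only [disjoint_union_left, disjoint_union_right]
  exact ⟨⟨hst, (disjoint_shift ht hs).symm⟩, disjoint_shift hs ht,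
    (disjoint_image (add_left_injective a)).2 hst⟩

section Embedding

variable {K L ω : ℕ} {f : ZMod L →+ ZMod K}

lemma dset_image (f : ZMod L →+ ZMod K) (I : Finset (ZMod L)) :
    dset (I.image f) = (dset I).image f := by
  simp only [dset, ← prodMap_image_product, image_image]
  exact image_congr fun p _ => (map_sub f p.1 p.2).symm

lemma dstar_image (hf : Function.Injective f) (I : Finset (ZMod L)) :
    dstar (I.image f) = (dstar I).image f := by
  rw [dstar, dstar, image_sdiff _ _ hf, dset_image, image_singleton, map_zero]

lemma mem_range_of_mem_dstar_image (hf : Function.Injective f) {I : Finset (ZMod L)} {x : ZMod K}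
    (hx : x ∈ dstar (I.image f)) : x ∈ f.range := by
  rw [dstar_image hf] at hx
  obtain ⟨y, -, rfl⟩ := mem_image.1 hx
  exact ⟨y, rfl⟩

lemma disjoint_dplus_image (hf : Function.Injective f) (h1 : 1 ∉ f.range) {I J : Finset (ZMod L)}
    (hIJ : Disjoint (dstar I) (dstar J)) : Disjoint (dplus (I.image f)) (dplus (J.image f)) := by
  refine disjoint_union_image_add_right h1 (fun _ => mem_range_of_mem_dstar_image hf)
    (fun _ => mem_range_of_mem_dstar_image hf) ?_
  rw [dstar_image hf, dstar_image hf]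
  exact (disjoint_image hf).2 hIJ

lemma IsCAC.isSCAC_image (hf : Function.Injective f) (h1 : 1 ∉ f.range)
    {C : Finset (Finset (ZMod L))} (hC : IsCAC L ω C) : IsSCAC K ω (C.image (image f)) := by
  obtain ⟨hcard, hdisj⟩ := hC
  simp only [IsSCAC, forall_mem_image]
  refine ⟨fun I hI => ?_, fun I _ => ⟨fun h => ?_, fun h => ?_⟩, fun I hI J hJ hne => ?_⟩
  · rw [card_image_of_injective I hf, hcard I hI]
  · exact h1 (mem_range_of_mem_dstar_image hf h)
  · exact h1 (neg_mem_iff.1 (mem_range_of_mem_dstar_image hf h))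
  · exact disjoint_dplus_image hf h1 (hdisj I hI J hJ (ne_of_apply_ne _ hne))

lemma bddAbove_card_isSCAC (K ω : ℕ) [NeZero K] :
    BddAbove {n | ∃ C : Finset (Finset (ZMod K)), IsSCAC K ω C ∧ C.card = n} := by
  refine ⟨Fintype.card (Finset (ZMod K)), ?_⟩
  rintro _ ⟨C, -, rfl⟩
  exact card_le_univ C

lemma MCAC_le_MS_of_injective [NeZero K] (hf : Function.Injective f) (h1 : 1 ∉ f.range) :
    MCAC L ω ≤ MS K ω := by
  refine csSup_le_csSup' (bddAbove_card_isSCAC K ω) ?_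
  rintro _ ⟨C, hC, rfl⟩
  exact ⟨C.image (image f), hC.isSCAC_image hf h1, card_image_of_injective C (image_injective hf)⟩

end Embedding

theorem CAC_to_SCAC (L ω M : ℕ) (hL : 2 ≤ L) (hω : 1 ≤ ω)
    (C : Finset (Finset (ZMod L))) (hC : IsCAC L ω C) (hM : C.card = M) :
    IsSCAC (2 * L) ω (C.image double) ∧ (C.image double).card = M ∧
    MCAC L ω ≤ MS (2 * L) ω := by
  have : NeZero L := ⟨by omega⟩
  have hinj : Function.Injective (dilation 2 L) := dilation_injective two_ne_zero
  have hodd : 1 ∉ (dilation 2 L).range := one_notMem_range_dilation (by decide)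
  rw [double_eq_image_dilation]
  exact ⟨hC.isSCAC_image hinj hodd, (card_image_of_injective C (image_injective hinj)).trans hM,
    MCAC_le_MS_of_injective hinj hodd⟩
end
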